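/- For every n ≥ 1 and every weakly decreasing integer sequence k_1 ≥ k_2 ≥ ⋯ ≥ k_n, the set 𝒢_n(k_1,…,k_n) of Generalized Monotone Triangles with bottom row (k_1,…,k_n) is equal to the set of Decreasing Monotone Triangles with bottom row (k_1,…,k_n). -/

import Mathlib

/-- A triangular array of size `n`, encoded as a function `ℕ → ℕ → ℤ` whose
meaningful entries are `a i j` for `1 ≤ j ≤ i ≤ n` (row `i` has entries
`a i 1, …, a i i`), normalized to be `0` outside this region. -/
def IsTri (n : ℕ) (a : ℕ → ℕ → ℤ) : Prop :=
  ∀ i j, ¬ (1 ≤ j ∧ j ≤ i ∧ i ≤ n) → a i j = 0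

/-- A Monotone Triangle of size `n`: strict increase along rows and weak
increase along North-East and South-East diagonals. -/
def IsMT (n : ℕ) (a : ℕ → ℕ → ℤ) : Prop :=
  IsTri n a ∧
  (∀ i j, 1 ≤ j → j + 1 ≤ i → i ≤ n → a i j < a i (j + 1)) ∧
  (∀ i j, 1 ≤ j → j ≤ i → i + 1 ≤ n →
    a (i + 1) j ≤ a i j ∧ a i j ≤ a (i + 1) (j + 1))

/-- A Generalized Monotone Triangle (GMT) of size `n`. -/
def IsGMT (n : ℕ) (a : ℕ → ℕ → ℤ) : Prop :=
  IsTri n a ∧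
  -- (1) each entry is weakly bounded by its SW- and SE-neighbour
  (∀ i j, 1 ≤ j → j ≤ i → i + 1 ≤ n →
    min (a (i + 1) j) (a (i + 1) (j + 1)) ≤ a i j ∧
    a i j ≤ max (a (i + 1) j) (a (i + 1) (j + 1))) ∧
  -- (2) three weakly increasing consecutive entries force strict increase above
  (∀ i j, 1 ≤ j → j + 1 ≤ i → i + 1 ≤ n →
    a (i + 1) j ≤ a (i + 1) (j + 1) → a (i + 1) (j + 1) ≤ a (i + 1) (j + 2) →
    a i j < a i (j + 1)) ∧
  -- (3) equality over a strict descent forces an equal neighbour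
  (∀ i j, 1 ≤ j → j ≤ i → i + 1 ≤ n →
    (a i j = a (i + 1) j → a (i + 1) (j + 1) < a (i + 1) j →
      2 ≤ j ∧ a i (j - 1) = a i j) ∧
    (a (i + 1) (j + 1) < a (i + 1) j → a (i + 1) (j + 1) = a i j →
      j + 1 ≤ i ∧ a i (j + 1) = a i j))

/-- The bottom row of a triangular array of size `n` is `(k 0, …, k (n-1))`
(1-indexed in the array). -/
def BottomRow (n : ℕ) (a : ℕ → ℕ → ℤ) (k : Fin n → ℤ) : Prop :=
  ∀ j : Fin n, a n (j.1 + 1) = k j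

/-- The set of Monotone Triangles of size `n` with bottom row `k`. -/
def MTset (n : ℕ) (k : Fin n → ℤ) : Set (ℕ → ℕ → ℤ) :=
  {a | IsMT n a ∧ BottomRow n a k}

/-- The set `𝒢ₙ(k)` of Generalized Monotone Triangles of size `n` with bottom row `k`. -/
def GMTset (n : ℕ) (k : Fin n → ℤ) : Set (ℕ → ℕ → ℤ) :=
  {a | IsGMT n a ∧ BottomRow n a k}

/-- The positions `(i, j)` of newcomers of a triangular array:
`a (i+1) j > a i j > a (i+1) (j+1)`. -/
def newcomersF (n : ℕ) (a : ℕ → ℕ → ℤ) : Finset (ℕ × ℕ) :=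
  ((Finset.range (n + 1)) ×ˢ (Finset.range (n + 1))).filter (fun p =>
    1 ≤ p.2 ∧ p.2 ≤ p.1 ∧ p.1 + 1 ≤ n ∧
    a p.1 p.2 < a (p.1 + 1) p.2 ∧ a (p.1 + 1) (p.2 + 1) < a p.1 p.2)

/-- The positions `(i, j)` of sign-changing pairs `(a i j, a i (j+1))` of a
triangular array: two equal consecutive entries whose interlaced neighbour
below is also equal to them. -/
def scPairsF (n : ℕ) (a : ℕ → ℕ → ℤ) : Finset (ℕ × ℕ) :=
  ((Finset.range (n + 1)) ×ˢ (Finset.range (n + 1))).filter (fun p =>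
    1 ≤ p.2 ∧ p.2 + 1 ≤ p.1 ∧ p.1 + 1 ≤ n ∧
    a p.1 p.2 = a p.1 (p.2 + 1) ∧ a (p.1 + 1) (p.2 + 1) = a p.1 p.2)

/-- `sc(A)`: the total number of newcomers and sign-changing pairs of `A`. -/
def scT (n : ℕ) (a : ℕ → ℕ → ℤ) : ℕ :=
  (newcomersF n a).card + (scPairsF n a).card

/-- The number of occurrences of `x` in row `i` of the array `a`. -/
def rowCount (a : ℕ → ℕ → ℤ) (i : ℕ) (x : ℤ) : ℕ :=
  ((Finset.Icc 1 i).filter (fun j => a i j = x)).card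

/-- A Decreasing Monotone Triangle (DMT) of size `n`: weak decrease along
North-East and South-East diagonals, each integer appears at most twice in a
row, and two consecutive rows do not contain the same integer exactly once. -/
def IsDMT (n : ℕ) (a : ℕ → ℕ → ℤ) : Prop :=
  IsTri n a ∧
  (∀ i j, 1 ≤ j → j ≤ i → i + 1 ≤ n →
    a i j ≤ a (i + 1) j ∧ a (i + 1) (j + 1) ≤ a i j) ∧
  (∀ i, i ≤ n → ∀ x : ℤ, rowCount a i x ≤ 2) ∧
  (∀ i, i + 1 ≤ n → ∀ x : ℤ, ¬ (rowCount a i x = 1 ∧ rowCount a (i + 1) x = 1))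

/-- A row that decreases at each step decreases weakly throughout. -/
lemma row_le_of_step {a : ℕ → ℕ → ℤ} {i : ℕ}
    (h : ∀ j, 1 ≤ j → j + 1 ≤ i → a i (j + 1) ≤ a i j)
    {j m : ℕ} (hj : 1 ≤ j) (hjm : j ≤ m) (hm : m ≤ i) : a i m ≤ a i j := by
  induction m, hjm using Nat.le_induction with
  | base => exact le_rfl
  | succ m hjm ih => exact (h m (hj.trans hjm) hm).trans (ih (by omega))

lemma bottomRow_step {n : ℕ} {a : ℕ → ℕ → ℤ} {k : Fin n → ℤ} (hk : Antitone k)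
    (hb : BottomRow n a k) {j : ℕ} (hj : 1 ≤ j) (hjn : j + 1 ≤ n) :
    a n (j + 1) ≤ a n j := by
  obtain ⟨m, rfl⟩ := Nat.exists_eq_add_of_le' hj
  have h₁ := hb ⟨m, by omega⟩
  have h₂ := hb ⟨m + 1, by omega⟩
  simp only at h₁ h₂
  rw [h₁, h₂]
  exact hk (by simp)

/-- A value occurs exactly once in a row as soon as it occurs at `j` and at no other position. -/
lemma rowCount_eq_one {a : ℕ → ℕ → ℤ} {i j : ℕ} {x : ℤ} (hj : 1 ≤ j) (hji : j ≤ i)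
    (hx : a i j = x) (h : ∀ m, 1 ≤ m → m ≤ i → a i m = x → m = j) : rowCount a i x = 1 := by
  rw [rowCount, Finset.card_eq_one]
  refine ⟨j, ?_⟩
  ext m
  simp only [Finset.mem_filter, Finset.mem_Icc, Finset.mem_singleton]
  constructor
  · rintro ⟨⟨h₁, h₂⟩, h₃⟩
    exact h m h₁ h₂ h₃
  · rintro rfl
    exact ⟨⟨hj, hji⟩, hx⟩

lemma exists_unique_of_rowCount_eq_one {a : ℕ → ℕ → ℤ} {i : ℕ} {x : ℤ}
    (h : rowCount a i x = 1) :
    ∃ j, 1 ≤ j ∧ j ≤ i ∧ a i j = x ∧ ∀ m, 1 ≤ m → m ≤ i → a i m = x → m = j := by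
  rw [rowCount, Finset.card_eq_one] at h
  obtain ⟨j, hj⟩ := h
  have key : ∀ m, ((1 ≤ m ∧ m ≤ i) ∧ a i m = x) ↔ m = j := fun m => by
    simpa using congrArg (m ∈ ·) hj
  obtain ⟨⟨h₁, h₂⟩, h₃⟩ := (key j).2 rfl
  exact ⟨j, h₁, h₂, h₃, fun m h₁ h₂ h₃ => (key m).1 ⟨⟨h₁, h₂⟩, h₃⟩⟩

/-- In a weakly decreasing row without three consecutive equal entries, every value occurs at
most twice. -/
lemma rowCount_le_two {a : ℕ → ℕ → ℤ} {i : ℕ}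
    (hrow : ∀ j, 1 ≤ j → j + 1 ≤ i → a i (j + 1) ≤ a i j)
    (h : ∀ j, 1 ≤ j → j + 2 ≤ i → a i j ≠ a i (j + 2)) (x : ℤ) : rowCount a i x ≤ 2 := by
  by_contra! hc
  rw [rowCount] at hc
  have hne : ((Finset.Icc 1 i).filter (fun j => a i j = x)).Nonempty :=
    Finset.card_pos.1 (by omega)
  set s := (Finset.Icc 1 i).filter (fun j => a i j = x) with hs
  have hmem : ∀ m, m ∈ s ↔ (1 ≤ m ∧ m ≤ i) ∧ a i m = x := by simp [hs]
  set j := s.min' hne with hjdef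
  obtain ⟨⟨hj₁, hj₂⟩, hjx⟩ := (hmem j).1 (s.min'_mem hne)
  have hsub : s ⊆ {j, j + 1} := by
    intro m hm
    obtain ⟨⟨hm₁, hm₂⟩, hmx⟩ := (hmem m).1 hm
    have hjm : j ≤ m := s.min'_le m hm
    by_contra hmj
    simp only [Finset.mem_insert, Finset.mem_singleton, not_or] at hmj
    have h₁ : a i (j + 2) ≤ a i j := row_le_of_step hrow hj₁ (by omega) (by omega)
    have h₂ : a i m ≤ a i (j + 2) := row_le_of_step hrow (by omega) (by omega) hm₂
    exact h j hj₁ (by omega) (by omega)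
  have := (Finset.card_le_card hsub).trans Finset.card_le_two
  omega

lemma ne_of_rowCount_le_two {a : ℕ → ℕ → ℤ} {i j : ℕ}
    (hrow : ∀ j, 1 ≤ j → j + 1 ≤ i → a i (j + 1) ≤ a i j)
    (h : ∀ x, rowCount a i x ≤ 2) (hj : 1 ≤ j) (hji : j + 2 ≤ i) : a i j ≠ a i (j + 2) := by
  intro he
  have h₁ := hrow j hj (by omega)
  have h₂ : a i (j + 2) ≤ a i (j + 1) := hrow (j + 1) (by omega) (by omega)
  have hsub : ({j, j + 1, j + 2} : Finset ℕ) ⊆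
      (Finset.Icc 1 i).filter (fun m => a i m = a i j) := by
    intro m hm
    simp only [Finset.mem_insert, Finset.mem_singleton] at hm
    simp only [Finset.mem_filter, Finset.mem_Icc]
    rcases hm with rfl | rfl | rfl
    · exact ⟨by omega, rfl⟩
    · exact ⟨by omega, by omega⟩
    · exact ⟨by omega, he.symm⟩
  have hcard := (Finset.card_le_card hsub).trans (h (a i j))
  rw [Finset.card_eq_three.2 ⟨j, j + 1, j + 2, by omega, by omega, by omega, rfl⟩] at hcard
  omega

/-- The rows of a GMT with weakly decreasing bottom row are weakly decreasing. -/
lemma IsGMT.row_step {n : ℕ} {a : ℕ → ℕ → ℤ} (ha : IsGMT n a)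
    (hn : ∀ j, 1 ≤ j → j + 1 ≤ n → a n (j + 1) ≤ a n j) {i : ℕ} (hi : i ≤ n) :
    ∀ j, 1 ≤ j → j + 1 ≤ i → a i (j + 1) ≤ a i j := by
  induction hi using Nat.decreasingInduction with
  | self => exact hn
  | of_succ i hi ih =>
    intro j hj hji
    have h₁ := (ha.2.1 i j hj (by omega) hi).1
    have h₂ := (ha.2.1 i (j + 1) (by omega) hji hi).2
    rw [min_eq_right (ih j hj (by omega))] at h₁
    rw [max_eq_left (ih (j + 1) (by omega) (by omega))] at h₂
    exact h₂.trans h₁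

lemma IsGMT.isDMT {n : ℕ} {a : ℕ → ℕ → ℤ} (ha : IsGMT n a)
    (hn : ∀ j, 1 ≤ j → j + 1 ≤ n → a n (j + 1) ≤ a n j) : IsDMT n a := by
  have hrow := fun i (hi : i ≤ n) => ha.row_step hn hi
  obtain ⟨htri, hbetween, hstrict, hneighbour⟩ := ha
  have hdiag : ∀ i j, 1 ≤ j → j ≤ i → i + 1 ≤ n →
      a i j ≤ a (i + 1) j ∧ a (i + 1) (j + 1) ≤ a i j := by
    intro i j hj hji hi
    have h := hbetween i j hj hji hi
    have hstep := hrow (i + 1) hi j hj (by omega)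
    rw [min_eq_right hstep, max_eq_left hstep] at h
    exact ⟨h.2, h.1⟩
  refine ⟨htri, hdiag, fun i hi => rowCount_le_two (hrow i hi) ?_, ?_⟩
  · intro j hj hji he
    obtain ⟨i, rfl⟩ : ∃ m, i = m + 1 := ⟨i - 1, by omega⟩
    have h₁ := hrow (i + 1) hi j hj (by omega)
    have h₂ : a (i + 1) (j + 2) ≤ a (i + 1) (j + 1) :=
      hrow (i + 1) hi (j + 1) (by omega) (by omega)
    have h₃ := hstrict i j hj (by omega) hi (by omega) (by omega)
    have h₄ := (hdiag i j hj (by omega) hi).2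
    have h₅ := (hdiag i (j + 1) (by omega) (by omega) hi).1
    omega
  · rintro i hi x ⟨hup, hdown⟩
    obtain ⟨j, hj, hji, hjx, huniq⟩ := exists_unique_of_rowCount_eq_one hup
    obtain ⟨m, hm, hmi, hmx, hmuniq⟩ := exists_unique_of_rowCount_eq_one hdown
    have hd := hdiag i j hj hji hi
    have hnb := hneighbour i j hj hji hi
    rcases Nat.lt_trichotomy m j with hlt | rfl | hgt
    · have h := row_le_of_step (hrow (i + 1) hi) hm hlt.le (by omega)
      have := hmuniq j hj (by omega) (by omega)
      omega
    · have hne : a (i + 1) (m + 1) ≠ x := fun he => by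
        have := hmuniq (m + 1) (by omega) (by omega) he
        omega
      obtain ⟨h₁, h₂⟩ := hnb.1 (by omega) (by omega)
      have := huniq (m - 1) (by omega) (by omega) (by omega)
      omega
    · have h := row_le_of_step (hrow (i + 1) hi) (j := j + 1) (by omega) hgt hmi
      have := hmuniq (j + 1) (by omega) (by omega) (by omega)
      subst this
      have hne : a (i + 1) j ≠ x := fun he => by
        have := hmuniq j hj (by omega) he
        omega
      obtain ⟨h₁, h₂⟩ := hnb.2 (by omega) (by omega)
      have := huniq (j + 1) (by omega) (by omega) (by omega)
      omega

lemma IsDMT.isGMT {n : ℕ} {a : ℕ → ℕ → ℤ} (ha : IsDMT n a)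
    (hn : ∀ j, 1 ≤ j → j + 1 ≤ n → a n (j + 1) ≤ a n j) : IsGMT n a := by
  obtain ⟨htri, hdiag, htwice, honce⟩ := ha
  have hrow : ∀ i, i ≤ n → ∀ j, 1 ≤ j → j + 1 ≤ i → a i (j + 1) ≤ a i j := by
    intro i hi j hj hji
    rcases hi.eq_or_lt with rfl | hlt
    · exact hn j hj hji
    · exact (hdiag i (j + 1) (by omega) hji hlt).1.trans (hdiag i j hj (by omega) hlt).2
  refine ⟨htri, ?_, ?_, ?_⟩
  · intro i j hj hji hi
    have h := hdiag i j hj hji hi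
    exact ⟨(min_le_right _ _).trans h.2, h.1.trans (le_max_left _ _)⟩
  · intro i j hj hji hi h₁ h₂
    have h₃ := hrow (i + 1) hi j hj (by omega)
    have h₄ : a (i + 1) (j + 2) ≤ a (i + 1) (j + 1) :=
      hrow (i + 1) hi (j + 1) (by omega) (by omega)
    exact absurd (by omega)
      (ne_of_rowCount_le_two (hrow (i + 1) hi) (htwice (i + 1) hi) hj (by omega))
  · intro i j hj hji hi
    have hle := fun m l (hm : 1 ≤ m) (hml : m ≤ l) (hl : l ≤ i) =>
      row_le_of_step (hrow i (by omega)) hm hml hl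
    have hle' := fun m l (hm : 1 ≤ m) (hml : m ≤ l) (hl : l ≤ i + 1) =>
      row_le_of_step (hrow (i + 1) hi) hm hml hl
    constructor
    · intro he hlt
      by_contra hc
      have hprev : 2 ≤ j → a i j < a i (j - 1) := fun h => by
        have := hle (j - 1) j (by omega) (by omega) hji
        have : a i (j - 1) ≠ a i j := fun h' => hc ⟨h, h'⟩
        omega
      refine honce i hi (a i j) ⟨rowCount_eq_one hj hji rfl ?_,
        rowCount_eq_one hj (by omega) he.symm ?_⟩
      · intro m hm hmi hmx
        rcases Nat.lt_trichotomy m j with h | h | h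
        · have := hle m (j - 1) hm (by omega) (by omega)
          have := hprev (by omega)
          omega
        · exact h
        · have := hle (j + 1) m (by omega) h hmi
          have := (hdiag i (j + 1) (by omega) (by omega) hi).1
          omega
      · intro m hm hmi hmx
        rcases Nat.lt_trichotomy m j with h | h | h
        · have := hle' m (j - 1) hm (by omega) (by omega)
          have := (hdiag i (j - 1) (by omega) (by omega) hi).1
          have := hprev (by omega)
          omega
        · exact h
        · have := hle' (j + 1) m (by omega) h hmi
          omega
    · intro hlt he
      by_contra hc
      have hnext : j + 1 ≤ i → a i (j + 1) < a i j := fun h => by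
        have := hle j (j + 1) hj (by omega) h
        have : a i (j + 1) ≠ a i j := fun h' => hc ⟨h, h'⟩
        omega
      refine honce i hi (a i j) ⟨rowCount_eq_one hj hji rfl ?_,
        rowCount_eq_one (j := j + 1) (by omega) (by omega) he ?_⟩
      · intro m hm hmi hmx
        rcases Nat.lt_trichotomy m j with h | h | h
        · have := hle m (j - 1) hm (by omega) (by omega)
          have := (hdiag i (j - 1) (by omega) (by omega) hi).2
          rw [Nat.sub_add_cancel hj] at this
          omega
        · exact h
        · have := hle (j + 1) m (by omega) h hmi
          have := hnext (by omega)
          omega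
      · intro m hm hmi hmx
        rcases Nat.lt_trichotomy m (j + 1) with h | h | h
        · have := hle' m j hm (by omega) (by omega)
          omega
        · exact h
        · have := hle' (j + 2) m (by omega) h hmi
          have := (hdiag i (j + 1) (by omega) (by omega) hi).2
          have := hnext (by omega)
          simp only [Nat.add_assoc, Nat.reduceAdd] at *
          omega

/-- For every `n ≥ 1` and every weakly decreasing `k`, the set of Generalized
Monotone Triangles with bottom row `k` equals the set of Decreasing Monotone
Triangles with bottom row `k`. -/
theorem GMT_eq_DMT_of_antitone (n : ℕ) (hn : 1 ≤ n)
    (k : Fin n → ℤ) (hk : Antitone k) :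
    GMTset n k = {a | IsDMT n a ∧ BottomRow n a k} := by
  ext a
  constructor
  · rintro ⟨ha, hb⟩
    exact ⟨ha.isDMT fun j hj hjn => bottomRow_step hk hb hj hjn, hb⟩
  · rintro ⟨ha, hb⟩
    exact ⟨ha.isGMT fun j hj hjn => bottomRow_step hk hb hj hjn, hb⟩
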